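/- arXiv:2508.21765 — 2 statements merged into one kernel-verified Lean document; each statement's English description precedes it below -/
import Mathlib

section
/- Let E = ℝ^{n₁×n₂} × ℝ^{n₁×n₂} × ℝ^{2n₁×n₂} with the product trace inner product, and let f = g + h where g, h : E → ℝ are lower semi-continuous convex functions, h is Gateaux differentiable, and g is separable: g(p₁,p₂,p₃) = Q₁(p₁) + Q₂(p₂) + Q₃(p₃). Then (p₁*, p₂*, p₃*) is a global minimizer of f if and only if simultaneously p₁* minimizes p₁ ↦ f(p₁, p₂*, p₃*), p₂* minimizes p₂ ↦ f(p₁*, p₂, p₃*), and p₃* minimizes p₃ ↦ f(p₁*, p₂*, p₃). -/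
/-!
If `x` minimizes `G + h` along the segment from `x` to `x + v`, where `G` is convex and `h` has
directional derivative `d` at `x` along `v`, then `G x - G (x + v) ≤ d`. Applied to displacements
in a single block, this bounds each block derivative of `h` below by the decrease of the
corresponding `Qᵢ`. Gateaux differentiability makes the directional derivative linear in the
displacement and separability makes the decrease of `g` additive over the blocks, so the three
bounds add up to `g x - g (x + v) ≤ h'(x; v)` for an arbitrary `v`. Convexity of `h` gives
`h'(x; v) ≤ h (x + v) - h x`, hence global minimality.
-/

/-- Trace inner product ⟨X,Y⟩ = trace(Xᵀ Y). -/
def mInner {m n : Type*} [Fintype m] [Fintype n] (X Y : Matrix m n ℝ) : ℝ :=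
  ∑ i, ∑ j, X i j * Y i j

/-- The product space E = ℝ^{n₁×n₂} × ℝ^{n₁×n₂} × ℝ^{2n₁×n₂}. -/
abbrev Trip (n₁ n₂ : ℕ) :=
  Matrix (Fin n₁) (Fin n₂) ℝ × Matrix (Fin n₁) (Fin n₂) ℝ ×
    Matrix (Fin n₁ ⊕ Fin n₁) (Fin n₂) ℝ

/-- The direct-sum trace inner product on E. -/
def tripInner {n₁ n₂ : ℕ} (x y : Trip n₁ n₂) : ℝ :=
  mInner x.1 y.1 + mInner x.2.1 y.2.1 + mInner x.2.2 y.2.2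

/-- A linear lower bound for `φ` on `(0, 1)` which is exact at `0` bounds the derivative at `0`. -/
lemma le_deriv_of_linear_le {φ : ℝ → ℝ} {c d : ℝ} (hφ : HasDerivAt φ d 0)
    (hle : ∀ t : ℝ, 0 < t → t < 1 → t * c ≤ φ t - φ 0) : c ≤ d := by
  refine ge_of_tendsto hφ.tendsto_slope_zero_right ?_
  filter_upwards [Ioo_mem_nhdsGT (zero_lt_one' ℝ)] with t ht
  have := hle t ht.1 ht.2
  rw [zero_add, smul_eq_mul, inv_mul_eq_div, le_div_iff₀ ht.1]
  linarith

/-- The chord bound for a convex function along the segment from `x` to `x + v`. -/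
lemma convexOn_univ_segment_le {V : Type*} [AddCommGroup V] [Module ℝ V] {G : V → ℝ}
    (hG : ConvexOn ℝ Set.univ G) (x v : V) {t : ℝ} (h0 : 0 < t) (h1 : t < 1) :
    G (x + t • v) - G x ≤ t * (G (x + v) - G x) := by
  have key := hG.2 (Set.mem_univ x) (Set.mem_univ (x + v)) (sub_nonneg.2 h1.le) h0.le (by ring)
  have e : (1 - t) • x + t • (x + v) = x + t • v := by module
  rw [e, smul_eq_mul, smul_eq_mul] at key
  linarith

/-- First-order necessary condition for minimality of `G + h` along the line `x + ℝ v`. -/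
lemma sub_le_deriv_of_min {V : Type*} [AddCommGroup V] [Module ℝ V] {G h : V → ℝ}
    (hG : ConvexOn ℝ Set.univ G) {x v : V} {d : ℝ}
    (hd : HasDerivAt (fun s : ℝ => h (x + s • v)) d 0)
    (hmin : ∀ t : ℝ, G x + h x ≤ G (x + t • v) + h (x + t • v)) :
    G x - G (x + v) ≤ d := by
  refine le_deriv_of_linear_le hd fun t h0 h1 => ?_
  have := convexOn_univ_segment_le hG x v h0 h1
  have := hmin t
  simp only [zero_smul, add_zero]
  linarith

/-- The gradient inequality for a convex function, using only its derivative along `v`. -/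
lemma deriv_le_sub_of_convexOn {V : Type*} [AddCommGroup V] [Module ℝ V] {h : V → ℝ}
    (hh : ConvexOn ℝ Set.univ h) {x v : V} {d : ℝ}
    (hd : HasDerivAt (fun s : ℝ => h (x + s • v)) d 0) :
    d ≤ h (x + v) - h x := by
  have := le_deriv_of_linear_le (c := -(h (x + v) - h x)) hd.neg fun t h0 h1 => by
    have := convexOn_univ_segment_le hh x v h0 h1
    simp only [Pi.neg_apply, zero_smul, add_zero]
    linarith
  linarith

/-- Let f = g + h on E, with g, h lower semi-continuous convex, h Gateaux differentiable,
and g separable: g(p₁,p₂,p₃) = Q₁(p₁) + Q₂(p₂) + Q₃(p₃). Then (p₁*,p₂*,p₃*) is a global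
minimizer of f iff it minimizes f in each variable separately. -/
theorem separable_minimizer_iff_componentwise (n₁ n₂ : ℕ)
    (Q₁ Q₂ : Matrix (Fin n₁) (Fin n₂) ℝ → ℝ)
    (Q₃ : Matrix (Fin n₁ ⊕ Fin n₁) (Fin n₂) ℝ → ℝ)
    (h : Trip n₁ n₂ → ℝ)
    (hg_lsc : LowerSemicontinuous (fun p : Trip n₁ n₂ => Q₁ p.1 + Q₂ p.2.1 + Q₃ p.2.2))
    (hg_cvx : ConvexOn ℝ Set.univ (fun p : Trip n₁ n₂ => Q₁ p.1 + Q₂ p.2.1 + Q₃ p.2.2))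
    (hh_lsc : LowerSemicontinuous h) (hh_cvx : ConvexOn ℝ Set.univ h)
    (h' : Trip n₁ n₂ → Trip n₁ n₂)
    (hGateaux : ∀ p v : Trip n₁ n₂,
      HasDerivAt (fun s : ℝ => h (p + s • v)) (tripInner (h' p) v) 0)
    (p₁s p₂s : Matrix (Fin n₁) (Fin n₂) ℝ) (p₃s : Matrix (Fin n₁ ⊕ Fin n₁) (Fin n₂) ℝ) :
    (∀ p : Trip n₁ n₂,
        Q₁ p₁s + Q₂ p₂s + Q₃ p₃s + h (p₁s, p₂s, p₃s) ≤
          Q₁ p.1 + Q₂ p.2.1 + Q₃ p.2.2 + h p) ↔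
      ((∀ p₁ : Matrix (Fin n₁) (Fin n₂) ℝ,
          Q₁ p₁s + Q₂ p₂s + Q₃ p₃s + h (p₁s, p₂s, p₃s) ≤
            Q₁ p₁ + Q₂ p₂s + Q₃ p₃s + h (p₁, p₂s, p₃s)) ∧
        (∀ p₂ : Matrix (Fin n₁) (Fin n₂) ℝ,
          Q₁ p₁s + Q₂ p₂s + Q₃ p₃s + h (p₁s, p₂s, p₃s) ≤
            Q₁ p₁s + Q₂ p₂ + Q₃ p₃s + h (p₁s, p₂, p₃s)) ∧
        (∀ p₃ : Matrix (Fin n₁ ⊕ Fin n₁) (Fin n₂) ℝ,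
          Q₁ p₁s + Q₂ p₂s + Q₃ p₃s + h (p₁s, p₂s, p₃s) ≤
            Q₁ p₁s + Q₂ p₂s + Q₃ p₃ + h (p₁s, p₂s, p₃))) := by
  constructor
  · intro H
    exact ⟨fun p => H (p, p₂s, p₃s), fun p => H (p₁s, p, p₃s), fun p => H (p₁s, p₂s, p)⟩
  · rintro ⟨H₁, H₂, H₃⟩ ⟨p₁, p₂, p₃⟩
    have D := hGateaux (p₁s, p₂s, p₃s)
    have b₁ := sub_le_deriv_of_min hg_cvx (D (p₁ - p₁s, 0, 0)) fun t => by
      simpa using H₁ (p₁s + t • (p₁ - p₁s))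
    have b₂ := sub_le_deriv_of_min hg_cvx (D (0, p₂ - p₂s, 0)) fun t => by
      simpa using H₂ (p₂s + t • (p₂ - p₂s))
    have b₃ := sub_le_deriv_of_min hg_cvx (D (0, 0, p₃ - p₃s)) fun t => by
      simpa using H₃ (p₃s + t • (p₃ - p₃s))
    have b := deriv_le_sub_of_convexOn hh_cvx (D (p₁ - p₁s, p₂ - p₂s, p₃ - p₃s))
    simp only [tripInner, mInner, Prod.mk_add_mk, add_sub_cancel, add_zero, Matrix.zero_apply,
      mul_zero, Finset.sum_const_zero, zero_add] at b₁ b₂ b₃ b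
    dsimp only
    linarith
end

section
/- Let n₁, n₂ ≥ 1, a > 0, 0 < T < T₂, β₁ > 0, and fix V ∈ ℝ^{2n₁×n₂}. Consider the function G(M) = Σ_{i,j} φ(‖M_{ij}‖₂;T,a) + (β₁/2)‖V − M‖_F² on ℝ^{2n₁×n₂}. Then G is strongly convex (i.e., μ-strongly convex for some μ > 0) if and only if β₁ > a, and G is convex if and only if β₁ ≥ a. -/
/-!
For every real `c`, the function `G - (c/2)‖·‖_F²` is convex if and only if `a + c ≤ β₁`
(`convexOn_Gfun_sub_iff`); both equivalences are instances, with `c = μ` and `c = 0`.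

The function splits as a sum over `(i, j)` of functions of the pair `M_{ij}` (`Gfun_sub_eq`).
On `[0, ∞)`, `φ(t) + (a/2)t²` equals
`(a T₂ / (2T)) H(t) + (a/2) max(t - T₂, 0)²`, where `H` is a Huber function. So it is convex and
nondecreasing, which is used in the form of supporting lines of nonnegative slope
(`exists_support`), and its composition with the Euclidean norm is convex. What remains of each
summand is the quadratic `((β₁ - c - a)/2)‖·‖₂²` up to an affine function, so the sum is convex
when `a + c ≤ β₁`. Conversely, on the concave piece `[T, T₂]` of `φ` the summands are quadratic
with second derivative `β₁ - c - a` along a radial line, and midpoint convexity at the endpoints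
`T`, `T₂` forces this number to be nonnegative.
-/

/-- The piecewise penalty function φ(t;T,a) (with upper threshold T₂). -/
noncomputable def phi (a T T₂ : ℝ) (t : ℝ) : ℝ :=
  if t < T then a * (T₂ - T) * t ^ 2 / (2 * T)
  else if t < T₂ then -(a / 2) * t ^ 2 + a * T₂ * t - a * T * T₂ / 2
  else a * T₂ * (T₂ - T) / 2

/-- Frobenius norm. -/
noncomputable def frobNorm {m n : Type*} [Fintype m] [Fintype n] (U : Matrix m n ℝ) : ℝ :=
  Real.sqrt (∑ i, ∑ j, (U i j) ^ 2)

/-- G(M) = Σ_{ij} φ(‖M_{ij}‖₂;T,a) + (β₁/2)‖V−M‖_F². -/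
noncomputable def Gfun {n₁ n₂ : ℕ} (a T T₂ β₁ : ℝ)
    (V M : Matrix (Fin n₁ ⊕ Fin n₁) (Fin n₂) ℝ) : ℝ :=
  (∑ i : Fin n₁, ∑ j : Fin n₂,
      phi a T T₂ (Real.sqrt (M (Sum.inl i) j ^ 2 + M (Sum.inr i) j ^ 2)))
    + β₁ / 2 * frobNorm (V - M) ^ 2

/-- The Huber function with threshold `T`, scaled by `2T`: `t²` below `T`, affine above it. -/
noncomputable def huber (T t : ℝ) : ℝ := if t < T then t ^ 2 else 2 * T * t - T ^ 2

lemma huber_support (T s t : ℝ) :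
    huber T s + 2 * min s T * (t - s) ≤ huber T t := by
  unfold huber
  rcases lt_or_ge s T with hs | hs <;> rcases lt_or_ge t T with ht | ht
  · rw [if_pos hs, if_pos ht, min_eq_left hs.le]
    nlinarith [sq_nonneg (t - s)]
  · rw [if_pos hs, if_neg ht.not_gt, min_eq_left hs.le]
    nlinarith [mul_nonneg (sub_nonneg.2 hs.le) (sub_nonneg.2 ht), sq_nonneg (T - s)]
  · rw [if_neg hs.not_gt, if_pos ht, min_eq_right hs]
    nlinarith [sq_nonneg (t - T)]
  · rw [if_neg hs.not_gt, if_neg ht.not_gt, min_eq_right hs]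
    nlinarith

lemma sq_posPart_support (s t : ℝ) :
    max s 0 ^ 2 + 2 * max s 0 * (t - s) ≤ max t 0 ^ 2 := by
  rcases le_total s 0 with hs | hs <;> rcases le_total t 0 with ht | ht <;>
    simp only [hs, ht, max_eq_left, max_eq_right] <;> nlinarith [sq_nonneg (t - s)]

lemma phi_add_sq {a T T₂ : ℝ} (hT : 0 < T) (hTT₂ : T < T₂) (t : ℝ) :
    phi a T T₂ t + a / 2 * t ^ 2
      = a * T₂ / (2 * T) * huber T t + a / 2 * max (t - T₂) 0 ^ 2 := by
  unfold phi huber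
  rcases lt_or_ge t T with h | h
  · rw [if_pos h, if_pos h, max_eq_right (by linarith)]
    field_simp
    ring
  · rw [if_neg h.not_gt, if_neg h.not_gt]
    rcases lt_or_ge t T₂ with h' | h'
    · rw [if_pos h', max_eq_right (by linarith)]
      field_simp
      ring
    · rw [if_neg h'.not_gt, max_eq_left (by linarith)]
      field_simp
      ring

/-- `φ(t) + (a/2)t²` has a supporting line of nonnegative slope at every `s ≥ 0`. -/
lemma exists_support {a T T₂ : ℝ} (ha : 0 < a) (hT : 0 < T) (hTT₂ : T < T₂) {s : ℝ}
    (hs : 0 ≤ s) : ∃ d, 0 ≤ d ∧ ∀ t,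
      phi a T T₂ s + a / 2 * s ^ 2 + d * (t - s) ≤ phi a T T₂ t + a / 2 * t ^ 2 := by
  have hk : 0 ≤ a * T₂ / (2 * T) := by
    have : 0 < T₂ := hT.trans hTT₂
    positivity
  refine ⟨a * T₂ / (2 * T) * (2 * min s T) + a / 2 * (2 * max (s - T₂) 0), ?_, fun t => ?_⟩
  · have := le_min hs hT.le
    have := le_max_right (s - T₂) 0
    positivity
  · rw [phi_add_sq hT hTT₂, phi_add_sq hT hTT₂]
    have h1 := mul_le_mul_of_nonneg_left (huber_support T s t) hk
    have h2 := mul_le_mul_of_nonneg_left (sq_posPart_support (s - T₂) (t - T₂)) (half_pos ha).le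
    linarith

lemma sqrt_sq_add_sq_convex {p q : ℝ} (hp : 0 ≤ p) (hq : 0 ≤ q) (x y x' y' : ℝ) :
    √((p * x + q * x') ^ 2 + (p * y + q * y') ^ 2)
      ≤ p * √(x ^ 2 + y ^ 2) + q * √(x' ^ 2 + y' ^ 2) := by
  have key : ∀ u v : ℝ, √(u ^ 2 + v ^ 2) = ‖(⟨u, v⟩ : ℂ)‖ := fun u v => by
    rw [Complex.norm_def, Complex.normSq_mk, sq, sq]
  have h := norm_add_le ((p : ℂ) * ⟨x, y⟩) ((q : ℂ) * ⟨x', y'⟩)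
  rw [norm_mul, norm_mul, Complex.norm_of_nonneg hp, Complex.norm_of_nonneg hq] at h
  rw [key, key, key]
  refine le_trans (le_of_eq (congrArg _ ?_)) h
  apply Complex.ext <;> simp

/-- The contribution of one pair of entries `(x, y)`, with data `(v, w)`, to
`G - (c/2)‖·‖_F²`. -/
noncomputable def cell (a T T₂ β c v w x y : ℝ) : ℝ :=
  phi a T T₂ (√(x ^ 2 + y ^ 2)) + β / 2 * ((v - x) ^ 2 + (w - y) ^ 2) - c / 2 * (x ^ 2 + y ^ 2)

lemma cell_convex {a T T₂ β c : ℝ} (ha : 0 < a) (hT : 0 < T) (hTT₂ : T < T₂) (hc : a + c ≤ β)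
    {p q : ℝ} (hp : 0 ≤ p) (hq : 0 ≤ q) (hpq : p + q = 1) (v w x y x' y' : ℝ) :
    cell a T T₂ β c v w (p * x + q * x') (p * y + q * y')
      ≤ p * cell a T T₂ β c v w x y + q * cell a T T₂ β c v w x' y' := by
  have hN := sqrt_sq_add_sq_convex hp hq x y x' y'
  obtain ⟨d, hd, h⟩ := exists_support ha hT hTT₂
    (Real.sqrt_nonneg ((p * x + q * x') ^ 2 + (p * y + q * y') ^ 2))
  have h1 := mul_le_mul_of_nonneg_left (h √(x ^ 2 + y ^ 2)) hp
  have h2 := mul_le_mul_of_nonneg_left (h √(x' ^ 2 + y' ^ 2)) hq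
  have h3 := mul_le_mul_of_nonneg_left hN hd
  have h4 : 0 ≤ (β - c - a) / 2 * (p * q * ((x - x') ^ 2 + (y - y') ^ 2)) :=
    mul_nonneg (by linarith) (by positivity)
  rw [Real.sq_sqrt (by positivity), Real.sq_sqrt (by positivity)] at h1 h2
  unfold cell
  obtain rfl : q = 1 - p := by linarith
  linear_combination h1 + h2 + h3 + h4

/-- Second difference of a summand along the first axis over the concave piece `[T, T₂]`. -/
lemma cell_second_diff {a T T₂ β c : ℝ} (hT : 0 < T) (hTT₂ : T < T₂) (v w : ℝ) :
    1 / 2 * cell a T T₂ β c v w T 0 + 1 / 2 * cell a T T₂ β c v w T₂ 0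
      - cell a T T₂ β c v w ((T + T₂) / 2) 0 = (β - c - a) * (T₂ - T) ^ 2 / 8 := by
  have hs : ∀ t : ℝ, 0 < t → √(t ^ 2 + 0 ^ 2) = t := fun t ht => by
    rw [zero_pow two_ne_zero, add_zero, Real.sqrt_sq ht.le]
  have hm1 : ¬ (T + T₂) / 2 < T := by linarith
  have hm2 : (T + T₂) / 2 < T₂ := by linarith
  unfold cell
  rw [hs T hT, hs T₂ (by linarith), hs _ (by linarith)]
  simp only [phi, lt_irrefl, if_false, if_pos hTT₂, if_neg hTT₂.not_gt, if_neg hm1, if_pos hm2]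
  ring

lemma frobNorm_sq_eq {n₁ n₂ : ℕ} (U : Matrix (Fin n₁ ⊕ Fin n₁) (Fin n₂) ℝ) :
    frobNorm U ^ 2 = ∑ i, ∑ j, (U (Sum.inl i) j ^ 2 + U (Sum.inr i) j ^ 2) := by
  refine (Real.sq_sqrt (Finset.sum_nonneg fun i _ => Finset.sum_nonneg fun j _ =>
    sq_nonneg _)).trans ?_
  rw [Fintype.sum_sum_type]
  simp only [Finset.sum_add_distrib]

lemma Gfun_sub_eq {n₁ n₂ : ℕ} (a T T₂ β c : ℝ) (V M : Matrix (Fin n₁ ⊕ Fin n₁) (Fin n₂) ℝ) :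
    Gfun a T T₂ β V M - c / 2 * frobNorm M ^ 2 = ∑ i, ∑ j,
      cell a T T₂ β c (V (Sum.inl i) j) (V (Sum.inr i) j) (M (Sum.inl i) j) (M (Sum.inr i) j) := by
  unfold Gfun cell
  rw [frobNorm_sq_eq, frobNorm_sq_eq]
  simp only [Finset.mul_sum, ← Finset.sum_add_distrib, ← Finset.sum_sub_distrib, Matrix.sub_apply]

lemma convexOn_Gfun_sub_iff {n₁ n₂ : ℕ} (hn₁ : 1 ≤ n₁) (hn₂ : 1 ≤ n₂)
    {a T T₂ β : ℝ} (c : ℝ) (ha : 0 < a) (hT : 0 < T) (hTT₂ : T < T₂)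
    (V : Matrix (Fin n₁ ⊕ Fin n₁) (Fin n₂) ℝ) :
    ConvexOn ℝ Set.univ (fun M : Matrix (Fin n₁ ⊕ Fin n₁) (Fin n₂) ℝ =>
      Gfun a T T₂ β V M - c / 2 * frobNorm M ^ 2) ↔ a + c ≤ β := by
  simp only [Gfun_sub_eq]
  constructor
  · intro h
    -- Test matrices with every pair `M_{ij}` equal to `(t, 0)`.
    let D : ℝ → Matrix (Fin n₁ ⊕ Fin n₁) (Fin n₂) ℝ := fun t r _ => Sum.elim (fun _ => t) 0 r
    have h2 := h.2 (Set.mem_univ (D T)) (Set.mem_univ (D T₂))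
      (by norm_num : (0 : ℝ) ≤ 1 / 2) (by norm_num : (0 : ℝ) ≤ 1 / 2) (by norm_num)
    have hD : (1 / 2 : ℝ) • D T + (1 / 2 : ℝ) • D T₂ = D ((T + T₂) / 2) := by
      ext r j
      rcases r with r | r
      · change (1 / 2 : ℝ) * T + 1 / 2 * T₂ = (T + T₂) / 2
        ring
      · change (1 / 2 : ℝ) * 0 + 1 / 2 * 0 = 0
        ring
    rw [hD] at h2
    simp only [smul_eq_mul, D, Sum.elim_inl, Sum.elim_inr, Pi.zero_apply] at h2
    rw [← sub_nonneg] at h2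
    simp only [Finset.mul_sum, ← Finset.sum_add_distrib, ← Finset.sum_sub_distrib,
      cell_second_diff hT hTT₂, Finset.sum_const, Finset.card_univ, Fintype.card_fin,
      nsmul_eq_mul] at h2
    have p1 : (0 : ℝ) < n₁ := by exact_mod_cast hn₁
    have p2 : (0 : ℝ) < n₂ := by exact_mod_cast hn₂
    have h3 := nonneg_of_mul_nonneg_right (nonneg_of_mul_nonneg_right h2 p1) p2
    by_contra hlt
    have : 0 < (T₂ - T) ^ 2 := pow_pos (sub_pos.2 hTT₂) 2
    nlinarith
  · intro hc
    refine ⟨convex_univ, fun X _ Y _ p q hp hq hpq => ?_⟩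
    simp only [smul_eq_mul, Finset.mul_sum, ← Finset.sum_add_distrib]
    exact Finset.sum_le_sum fun i _ => Finset.sum_le_sum fun j _ =>
      cell_convex ha hT hTT₂ hc hp hq hpq _ _ _ _ _ _

/-- G is strongly convex iff β₁ > a, and G is convex iff β₁ ≥ a. -/
theorem Gfun_stronglyConvex_iff_and_convex_iff (n₁ n₂ : ℕ) (hn₁ : 1 ≤ n₁) (hn₂ : 1 ≤ n₂)
    (a T T₂ β₁ : ℝ) (ha : 0 < a) (hT : 0 < T) (hTT₂ : T < T₂) (hβ₁ : 0 < β₁)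
    (V : Matrix (Fin n₁ ⊕ Fin n₁) (Fin n₂) ℝ) :
    ((∃ μ > (0 : ℝ), ConvexOn ℝ Set.univ
        (fun M : Matrix (Fin n₁ ⊕ Fin n₁) (Fin n₂) ℝ =>
          Gfun a T T₂ β₁ V M - μ / 2 * frobNorm M ^ 2)) ↔ a < β₁) ∧
    (ConvexOn ℝ Set.univ (Gfun a T T₂ β₁ V) ↔ a ≤ β₁) := by
  have key := fun c : ℝ => convexOn_Gfun_sub_iff (β := β₁) hn₁ hn₂ c ha hT hTT₂ V
  constructor
  · constructor
    · rintro ⟨μ, hμ, h⟩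
      have := (key μ).1 h
      linarith
    · intro h
      exact ⟨β₁ - a, sub_pos.2 h, (key _).2 (by linarith)⟩
  · simpa using key 0
end
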